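/- Every infinite prime poset with no infinite antichain contains an induced subposet whose comparability graph is isomorphic to the complement of G1 or to the complement of G2 (equivalently, it embeds one of the four transitive orientations of these two complement graphs). -/

import Mathlib

set_option autoImplicit false

/-- A set of vertices is autonomous if every vertex outside it is adjacent
either to all of its elements or to none of them. -/
def Autonomous {V : Type*} (G : SimpleGraph V) (A : Set V) : Prop :=
  ∀ v ∉ A, (∀ a ∈ A, G.Adj v a) ∨ (∀ a ∈ A, ¬ G.Adj v a)

/-- A graph is prime if it has more than three vertices and its only
autonomous sets are the trivial ones. -/
def PrimeGraph {V : Type*} (G : SimpleGraph V) : Prop :=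
  3 < Cardinal.mk V ∧
    ∀ A : Set V, Autonomous G A → A = ∅ ∨ (∃ x, A = {x}) ∨ A = Set.univ

/-- The bipartite graph `G0` on `A ∪ B` (`A, B` the two copies of `ℕ`),
with an edge `{a_i, b_j}` iff `i ≠ j`. -/
def G0 : SimpleGraph (ℕ ⊕ ℕ) :=
  SimpleGraph.fromRel (fun u v => ∃ i j : ℕ, u = Sum.inl i ∧ v = Sum.inr j ∧ i ≠ j)

/-- The bipartite graph `G1` (half complete bipartite graph),
with an edge `{a_i, b_j}` iff `i < j`. -/
def G1 : SimpleGraph (ℕ ⊕ ℕ) :=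
  SimpleGraph.fromRel (fun u v => ∃ i j : ℕ, u = Sum.inl i ∧ v = Sum.inr j ∧ i < j)

/-- The one-way infinite path `G2`, with an edge `{a_i, b_j}` iff `j = i` or `j = i + 1`. -/
def G2 : SimpleGraph (ℕ ⊕ ℕ) :=
  SimpleGraph.fromRel (fun u v =>
    ∃ i j : ℕ, u = Sum.inl i ∧ v = Sum.inr j ∧ (j = i ∨ j = i + 1))

/-- The graph `G3`: countably many disjoint edges `{a_i, b_i}` together with an
extra vertex `c` (here `none`) adjacent to every `b_i`. -/
def G3 : SimpleGraph (Option (ℕ ⊕ ℕ)) :=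
  SimpleGraph.fromRel (fun u v =>
    (∃ i : ℕ, u = some (Sum.inl i) ∧ v = some (Sum.inr i)) ∨
    (∃ i : ℕ, u = none ∧ v = some (Sum.inr i)))

/-- A subset `A` of a poset is autonomous if every element outside `A`
compares in the same way to all elements of `A`. -/
def PosetAutonomous {α : Type*} (P : PartialOrder α) (A : Set α) : Prop :=
  ∀ v ∉ A, ∀ a ∈ A, ∀ a' ∈ A, (P.lt v a → P.lt v a') ∧ (P.lt a v → P.lt a' v)

/-- A poset is prime if it has more than three elements and its only
autonomous sets are the trivial ones. -/
def PosetPrime {α : Type*} (P : PartialOrder α) : Prop :=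
  3 < Cardinal.mk α ∧
    ∀ A : Set α, PosetAutonomous P A → A = ∅ ∨ (∃ x, A = {x}) ∨ A = Set.univ

/-- The comparability graph of a poset: distinct comparable elements are adjacent. -/
def compGraph {α : Type*} (P : PartialOrder α) : SimpleGraph α :=
  SimpleGraph.fromRel (fun x y => P.le x y)

/-!
Suppose that the prime poset `α` has no infinite antichain and work in its incomparability graph,
where `G1` or `G2` has to be found.

Let `N` be an infinite order-convex subset. The connected components of its incomparability graph
are linearly ordered, so an interval of components is autonomous in `N`; by primality an element
`y ∉ N` separates two of its elements. If there are infinitely many components, choose infinitely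
many disjoint intervals. Convexity of `N` forces each separating `y` to be incomparable to all
intervals on one side and comparable to all those on the other, which gives `G1`. If there are
finitely many components and all degrees are finite, Kőnig's lemma gives an induced ray, that is
`G2`. Otherwise some `x ∈ N` is incomparable to infinitely many elements of `N`, which again form
an order-convex set; iterating, the elements `x` form an infinite antichain, a contradiction.
-/

section Ray

variable {V : Type*} {G : SimpleGraph V}

theorem exists_adj_dist_eq_add_one (hG : G.Connected) {v w : V} (hvw : v ≠ w) :
    ∃ u, G.Adj v u ∧ G.dist v w = G.dist u w + 1 := by
  obtain ⟨p, hp⟩ := hG.exists_walk_length_eq_dist v w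
  cases p with
  | nil => exact absurd rfl hvw
  | @cons _ u _ hvu q =>
    have hq : G.dist u w ≤ q.length := SimpleGraph.dist_le q
    have htri : G.dist v w ≤ G.dist v u + G.dist u w := hG.dist_triangle
    rw [SimpleGraph.dist_eq_one_iff_adj.2 hvu] at htri
    rw [SimpleGraph.Walk.length_cons] at hp
    exact ⟨u, hvu, by omega⟩

/-- The vertices `w` such that some geodesic from `r` to `w` passes through `v`. -/
def geodesicCone (G : SimpleGraph V) (r v : V) : Set V :=
  {w | G.dist r w = G.dist r v + G.dist v w}

theorem geodesicCone_self (r : V) : geodesicCone G r r = Set.univ := by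
  simp [geodesicCone]

theorem geodesicCone_subset (hG : G.Connected) (r v : V) :
    geodesicCone G r v ⊆
      {v} ∪ ⋃ u ∈ {u ∈ G.neighborSet v | G.dist r u = G.dist r v + 1}, geodesicCone G r u := by
  intro w (hw : G.dist r w = G.dist r v + G.dist v w)
  rcases eq_or_ne v w with rfl | hvw
  · exact Or.inl rfl
  obtain ⟨u, hvu, hu⟩ := exists_adj_dist_eq_add_one hG hvw
  have hru : G.dist r u ≤ G.dist r v + G.dist v u := hG.dist_triangle
  have hrw : G.dist r w ≤ G.dist r u + G.dist u w := hG.dist_triangle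
  rw [SimpleGraph.dist_eq_one_iff_adj.2 hvu] at hru
  exact Or.inr (Set.mem_biUnion ⟨hvu, by omega⟩
    (show G.dist r w = G.dist r u + G.dist u w by omega))

theorem exists_adj_infinite_geodesicCone (hG : G.Connected)
    (hfin : ∀ v, (G.neighborSet v).Finite) {r v : V} (hv : (geodesicCone G r v).Infinite) :
    ∃ u, G.Adj v u ∧ G.dist r u = G.dist r v + 1 ∧ (geodesicCone G r u).Infinite := by
  by_contra! hcone
  refine hv (((Set.finite_singleton v).union ?_).subset (geodesicCone_subset hG r v))
  exact ((hfin v).subset (Set.sep_subset _ _)).biUnion fun u hu =>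
    hcone u hu.1 hu.2

theorem nonempty_hasse_nat_embedding_of_dist_eq (hG : G.Connected) {r : V} {f : ℕ → V}
    (hadj : ∀ n, G.Adj (f n) (f (n + 1))) (hdist : ∀ n, G.dist r (f n) = n) :
    Nonempty (SimpleGraph.hasse ℕ ↪g G) := by
  have hinj : Function.Injective f := fun i j hij => by
    rw [← hdist i, hij, hdist]
  have hle : ∀ i j, G.Adj (f i) (f j) → j ≤ i + 1 := fun i j hij => by
    have htri : G.dist r (f j) ≤ G.dist r (f i) + G.dist (f i) (f j) := hG.dist_triangle
    rwa [hdist, hdist, SimpleGraph.dist_eq_one_iff_adj.2 hij] at htri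
  refine ⟨⟨⟨f, hinj⟩, fun {i j} => ?_⟩⟩
  simp only [Function.Embedding.coeFn_mk, SimpleGraph.hasse_adj, Nat.covBy_iff_add_one_eq]
  constructor
  · intro hij
    have hne : i ≠ j := fun h => hij.ne (congrArg f h)
    have := hle i j hij
    have := hle j i hij.symm
    omega
  · rintro (rfl | rfl)
    · exact hadj i
    · exact (hadj j).symm

theorem nonempty_hasse_nat_embedding_of_connected [Infinite V] (hG : G.Connected)
    (hfin : ∀ v, (G.neighborSet v).Finite) : Nonempty (SimpleGraph.hasse ℕ ↪g G) := by
  obtain ⟨r⟩ := hG.nonempty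
  choose! next hadj hdist hinf using
    fun v => exists_adj_infinite_geodesicCone (r := r) (v := v) hG hfin
  let f : ℕ → V := fun n => next^[n] r
  have hsucc : ∀ n, f (n + 1) = next (f n) := fun n => Function.iterate_succ_apply' next n r
  have hcone : ∀ n, (geodesicCone G r (f n)).Infinite := fun n => by
    induction n with
    | zero => exact geodesicCone_self (G := G) r ▸ Set.infinite_univ
    | succ n ih => exact hsucc n ▸ hinf _ ih
  refine nonempty_hasse_nat_embedding_of_dist_eq (f := f) hG
    (fun n => hsucc n ▸ hadj _ (hcone n)) (r := r) fun n => ?_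
  induction n with
  | zero => exact SimpleGraph.dist_self
  | succ n ih => rw [hsucc, hdist _ (hcone n), ih]

theorem nonempty_hasse_nat_embedding [Infinite V] [Finite G.ConnectedComponent]
    (hfin : ∀ v, (G.neighborSet v).Finite) : Nonempty (SimpleGraph.hasse ℕ ↪g G) := by
  obtain ⟨C, hC⟩ := Finite.exists_infinite_fiber G.connectedComponentMk
  have : Infinite C := hC
  let ι : C.toSimpleGraph ↪g G := SimpleGraph.Embedding.induce C.supp
  obtain ⟨φ⟩ := nonempty_hasse_nat_embedding_of_connected C.connected_toSimpleGraph
    fun v => Set.Finite.preimage ι.injective.injOn (hfin v)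
  exact ⟨φ.trans ι⟩

theorem nonempty_G2_embedding_hasse_nat : Nonempty (G2 ↪g SimpleGraph.hasse ℕ) := by
  let f : ℕ ⊕ ℕ → ℕ := Sum.elim (fun i => 2 * i + 1) (fun j => 2 * j)
  have hf : Function.Injective f := by
    rintro (i | i) (j | j) h <;> simp [f] at h ⊢ <;> omega
  refine ⟨⟨⟨f, hf⟩, fun {u v} => ?_⟩⟩
  rcases u with i | i <;> rcases v with j | j <;>
    simp [f, G2, SimpleGraph.hasse_adj, Nat.covBy_iff_add_one_eq] <;> omega

end Ray

theorem nonempty_G1_embedding_of_adj_iff_lt {V : Type*} {G : SimpleGraph V} {a b : ℕ → V}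
    (ha : ∀ i j, ¬ G.Adj (a i) (a j)) (hb : ∀ i j, ¬ G.Adj (b i) (b j))
    (hab : ∀ i j, G.Adj (a i) (b j) ↔ i < j) : Nonempty (G1 ↪g G) := by
  have hadj : ∀ u v, G.Adj (Sum.elim a b u) (Sum.elim a b v) ↔ G1.Adj u v := by
    have hba : ∀ i j, G.Adj (b j) (a i) ↔ i < j := fun i j => (G.adj_comm _ _).trans (hab i j)
    rintro (i | i) (j | j) <;> simp [G1, ha, hb, hab, hba]
  have hinj : Function.Injective (Sum.elim a b) := by
    intro u v huv
    -- `G1` has no two vertices with the same neighbours.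
    have hnbr : ∀ w, G1.Adj u w ↔ G1.Adj v w := fun w => by rw [← hadj, ← hadj, huv]
    rcases u with i | i <;> rcases v with j | j
    · have : ∀ k, i < k ↔ j < k := fun k => by simpa [G1] using hnbr (Sum.inr k)
      exact congrArg _ (eq_of_forall_gt_iff this)
    · simpa [G1] using hnbr (Sum.inr (i + 1))
    · simpa [G1] using hnbr (Sum.inr (j + 1))
    · have : ∀ k, k < i ↔ k < j := fun k => by simpa [G1] using hnbr (Sum.inl k)
      exact congrArg _ (eq_of_forall_lt_iff this)
  exact ⟨⟨⟨_, hinj⟩, hadj _ _⟩⟩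

theorem exists_seq_adj_of_forall_exists_inter_neighborSet {V : Type*} {G : SimpleGraph V}
    {p : Set V → Prop} {s : Set V} (hs : p s)
    (hstep : ∀ t, p t → ∃ x ∈ t, p (t ∩ G.neighborSet x)) :
    ∃ f : ℕ → V, ∀ m n, m < n → G.Adj (f m) (f n) := by
  have : Nonempty V := (hstep s hs).nonempty
  choose! x hmem hp using hstep
  let t : ℕ → Set V := fun n => (fun t => t ∩ G.neighborSet (x t))^[n] s
  have hsucc : ∀ n, t (n + 1) = t n ∩ G.neighborSet (x (t n)) := fun n =>
    Function.iterate_succ_apply' _ n s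
  have ht : ∀ n, p (t n) := fun n => by
    induction n with
    | zero => exact hs
    | succ n ih => exact hsucc n ▸ hp _ ih
  have hanti : Antitone t := antitone_nat_of_succ_le fun n => hsucc n ▸ Set.inter_subset_left
  refine ⟨fun n => x (t n), fun m n hmn => ?_⟩
  have hxn : x (t n) ∈ t (m + 1) := hanti (Nat.succ_le_of_lt hmn) (hmem _ (ht n))
  rw [hsucc] at hxn
  exact hxn.2

section Incomparability

variable {α : Type*} [P : PartialOrder α]

theorem exists_lt_not_incompRel (hanti : ∀ S : Set α, IsAntichain (· ≤ ·) S → S.Finite)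
    (f : ℕ → α) : ∃ m n, m < n ∧ ¬ IncompRel (· ≤ ·) (f m) (f n) := by
  by_contra! h
  have hpair : Pairwise (Function.onFun (IncompRel (· ≤ ·)) f) := (Std.Symm.pairwise_on f).2 h
  have hinj : Function.Injective f := fun m n hmn => by
    by_contra hne
    exact (hpair hne).ne hmn
  exact Set.infinite_range_of_injective hinj
    (hanti _ (hpair.range_pairwise.mono' fun _ _ hxy => hxy.not_le))

theorem exists_subseq_not_incompRel (hanti : ∀ S : Set α, IsAntichain (· ≤ ·) S → S.Finite)
    (f : ℕ → α) : ∃ g : ℕ ↪o ℕ, ∀ m n, ¬ IncompRel (· ≤ ·) (f (g m)) (f (g n)) := by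
  suffices ∃ g : ℕ ↪o ℕ, ∀ m n, m < n → ¬ IncompRel (· ≤ ·) (f (g m)) (f (g n)) by
    obtain ⟨g, hg⟩ := this
    refine ⟨g, fun m n hmn => ?_⟩
    rcases lt_trichotomy m n with h | rfl | h
    · exact hg m n h hmn
    · exact hmn.ne rfl
    · exact hg n m h hmn.symm
  obtain ⟨g, hg | hg⟩ := exists_increasing_or_nonincreasing_subseq (· ≤ ·) f
  · exact ⟨g, fun m n hmn => (hg m n hmn).not_incompRel⟩
  obtain ⟨g', hg' | hg'⟩ := exists_increasing_or_nonincreasing_subseq (· ≥ ·) (f ∘ g)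
  · exact ⟨g'.trans g, fun m n hmn h => h.not_ge (hg' m n hmn)⟩
  · obtain ⟨m, n, hmn, h⟩ := exists_lt_not_incompRel hanti (f ∘ g ∘ g')
    exact absurd ⟨hg _ _ (g'.strictMono hmn), hg' m n hmn⟩ h

/-- The incomparability graph of a poset, whose complement is the comparability graph. -/
def incompGraph (α : Type*) [PartialOrder α] : SimpleGraph α where
  Adj := IncompRel (· ≤ ·)
  symm := ⟨fun _ _ h => h.symm⟩
  loopless := ⟨fun _ h => h.1 le_rfl⟩

theorem incompGraph_compl : (incompGraph α)ᶜ = compGraph P := by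
  ext a b
  simp only [SimpleGraph.compl_adj, incompGraph, compGraph, SimpleGraph.fromRel_adj, IncompRel]
  tauto

section Blocks

variable {K : Type*} [LinearOrder K]

theorem nonempty_G1_embedding_of_incompRel_iff_lt
    (hanti : ∀ S : Set α, IsAntichain (· ≤ ·) S → S.Finite)
    [Infinite K] {a b : K → α} (hab : ∀ i j, IncompRel (· ≤ ·) (a i) (b j) ↔ i < j) :
    Nonempty (G1 ↪g incompGraph α) := by
  obtain ⟨c, hc⟩ := Infinite.exists_strictMono_or_strictAnti K
  obtain ⟨g, hg⟩ := exists_subseq_not_incompRel hanti (a ∘ c)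
  obtain ⟨g', hg'⟩ := exists_subseq_not_incompRel hanti (b ∘ c ∘ g)
  let e : ℕ → ℕ := g ∘ g'
  have he : StrictMono e := g.strictMono.comp g'.strictMono
  have ha : ∀ i j, ¬ (incompGraph α).Adj (a (c (e i))) (a (c (e j))) := fun i j => hg _ _
  have hb : ∀ i j, ¬ (incompGraph α).Adj (b (c (e i))) (b (c (e j))) := hg'
  rcases hc with hc | hc
  · exact nonempty_G1_embedding_of_adj_iff_lt ha hb fun i j =>
      (hab _ _).trans (hc.comp he).lt_iff_lt
  · exact nonempty_G1_embedding_of_adj_iff_lt hb ha fun i j =>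
      (incompRel_comm.trans (hab _ _)).trans (hc.comp_strictMono he).lt_iff_gt

theorem incompRel_iff_lt_of_forall_separating {N : Set α} (hN : N.OrdConnected) {B : K → Set α}
    (hBN : ∀ k, B k ⊆ N) (hB : ∀ k l, k < l → ∀ u ∈ B k, ∀ v ∈ B l, u < v) {y p q : K → α}
    (hy : ∀ k, y k ∉ N) (hp : ∀ k, p k ∈ B k) (hq : ∀ k, q k ∈ B k)
    (hyp : ∀ k, y k < p k) (hyq : ∀ k, ¬ y k < q k) (i j : K) :
    IncompRel (· ≤ ·) (p i) (y j) ↔ i < j := by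
  constructor
  · intro h
    by_contra! hji
    have hpp : p j ≤ p i := by
      rcases hji.eq_or_lt with rfl | hji
      · exact le_rfl
      · exact (hB j i hji _ (hp j) _ (hp i)).le
    exact h.not_ge ((hyp j).le.trans hpp)
  · exact fun hij =>
      ⟨fun hle => hy j (hN.out (hBN i (hp i)) (hBN j (hp j)) ⟨hle, (hyp j).le⟩),
        fun hle => hyq j (hle.trans_lt (hB i j hij _ (hp i) _ (hq j)))⟩

theorem nonempty_G1_embedding_of_forall_exists_separating [Infinite K]
    (hanti : ∀ S : Set α, IsAntichain (· ≤ ·) S → S.Finite) {N : Set α} (hN : N.OrdConnected)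
    {B : K → Set α} (hBN : ∀ k, B k ⊆ N) (hB : ∀ k l, k < l → ∀ u ∈ B k, ∀ v ∈ B l, u < v)
    (hsep : ∀ k, ∃ y ∉ N, ∃ p ∈ B k, ∃ q ∈ B k, (y < p ∧ ¬ y < q) ∨ (p < y ∧ ¬ q < y)) :
    Nonempty (G1 ↪g incompGraph α) := by
  choose y hy p hp q hq hsep using hsep
  have hinf : {k | y k < p k ∧ ¬ y k < q k}.Infinite ∨ {k | p k < y k ∧ ¬ q k < y k}.Infinite := by
    rw [← Set.infinite_union]
    exact Set.infinite_univ.mono fun k _ => hsep k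
  rcases hinf with hinf | hinf
  · have := hinf.to_subtype
    exact nonempty_G1_embedding_of_incompRel_iff_lt hanti fun i j =>
      incompRel_iff_lt_of_forall_separating (K := {k | y k < p k ∧ ¬ y k < q k}) hN
        (fun k => hBN k) (fun k l => hB k l) (fun k => hy k) (fun k => hp k) (fun k => hq k)
        (fun k => k.2.1) (fun k => k.2.2) i j
  · have := hinf.to_subtype
    -- The order dual of the previous case; reversing `K` as well, `y` and `p` exchange their roles.
    have hdual : ∀ i j : {k | p k < y k ∧ ¬ q k < y k},
        IncompRel (· ≤ ·) (y i) (p j) ↔ i < j := fun i j =>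
      incompRel_iff_lt_of_forall_separating (α := αᵒᵈ) (K := {k | p k < y k ∧ ¬ q k < y k}ᵒᵈ)
        hN.dual (fun k => hBN k.1) (fun k l hkl u hu v hv => hB l.1 k.1 hkl v hv u hu)
        (fun k => hy k.1) (fun k => hp k.1) (fun k => hq k.1)
        (fun k => k.2.1) (fun k => k.2.2) j i
    exact nonempty_G1_embedding_of_incompRel_iff_lt hanti hdual

end Blocks

namespace incompGraph

theorem lt_of_reachable {u v w : α} (huw : ¬ (incompGraph α).Reachable u w) (hlt : u < w)
    (huv : (incompGraph α).Reachable u v) : v < w := by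
  rw [SimpleGraph.reachable_iff_reflTransGen] at huv
  induction huv with
  | refl => exact hlt
  | @tail v v' huv hvv' hvw =>
    have huv' : (incompGraph α).Reachable u v' :=
      (SimpleGraph.reachable_iff_reflTransGen _ _).2 (huv.tail hvv')
    have hv'w : ¬ (incompGraph α).Reachable v' w := fun h => huw (huv'.trans h)
    rcases lt_or_eq_or_gt_or_incompRel v' w with h | rfl | h | h
    · exact h
    · exact absurd .rfl hv'w
    · exact absurd (hvw.trans h).le hvv'.not_le
    · exact absurd (SimpleGraph.Adj.reachable (G := incompGraph α) h) hv'w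

theorem lt_or_gt_of_not_reachable {u v : α} (huv : ¬ (incompGraph α).Reachable u v) :
    u < v ∨ v < u := by
  rcases lt_or_eq_or_gt_or_incompRel u v with h | rfl | h | h
  · exact .inl h
  · exact absurd .rfl huv
  · exact .inr h
  · exact absurd (SimpleGraph.Adj.reachable (G := incompGraph α) h) huv

theorem lt_of_reachable_of_reachable {u v u' v' : α} (huv : ¬ (incompGraph α).Reachable u v)
    (hlt : u < v) (hu : (incompGraph α).Reachable u u') (hv : (incompGraph α).Reachable v v') :
    u' < v' := by
  have hu'v : u' < v := lt_of_reachable huv hlt hu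
  have hu'v' : ¬ (incompGraph α).Reachable u' v' := fun h => huv (hu.trans (h.trans hv.symm))
  refine (lt_or_gt_of_not_reachable hu'v').resolve_right fun hgt => ?_
  exact hu'v.asymm (lt_of_reachable (fun h => hu'v' h.symm) hgt hv.symm)

/-- The components of the incomparability graph, ordered by `C < D` iff every element of `C` is
below every element of `D`. A poset is the ordered sum of these components. -/
noncomputable instance : LinearOrder (incompGraph α).ConnectedComponent :=
  haveI : IsStrictTotalOrder (incompGraph α).ConnectedComponent
      (fun C D => ∀ u ∈ C, ∀ v ∈ D, u < v) :=
    { irrefl := fun C h => by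
        obtain ⟨u, hu⟩ := C.nonempty_supp
        exact lt_irrefl u (h u hu u hu)
      trans := fun C D E hCD hDE u hu w hw => by
        obtain ⟨v, hv⟩ := D.nonempty_supp
        exact (hCD u hu v hv).trans (hDE v hv w hw)
      trichotomous := fun C D => by
        induction C using SimpleGraph.ConnectedComponent.ind with | _ c
        induction D using SimpleGraph.ConnectedComponent.ind with | _ d
        intro hCD hDC
        rw [SimpleGraph.ConnectedComponent.eq]
        by_contra hcd
        rcases lt_or_gt_of_not_reachable hcd with h | h
        · exact hCD fun u hu v hv => lt_of_reachable_of_reachable hcd h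
            (SimpleGraph.ConnectedComponent.exact hu).symm
            (SimpleGraph.ConnectedComponent.exact hv).symm
        · exact hDC fun v hv u hu => lt_of_reachable_of_reachable (fun h => hcd h.symm) h
            (SimpleGraph.ConnectedComponent.exact hv).symm
            (SimpleGraph.ConnectedComponent.exact hu).symm }
  letI := Classical.decRel fun C D : (incompGraph α).ConnectedComponent => ∀ u ∈ C, ∀ v ∈ D, u < v
  linearOrderOfSTO (fun C D => ∀ u ∈ C, ∀ v ∈ D, u < v)

theorem lt_of_connectedComponentMk_lt {u v : α}
    (h : (incompGraph α).connectedComponentMk u < (incompGraph α).connectedComponentMk v) :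
    u < v :=
  h u rfl v rfl

/-- The elements of `N` whose component in the incomparability graph of `N` lies between `C`
and `D`. -/
def componentInterval {N : Set α} (C D : (incompGraph N).ConnectedComponent) : Set α :=
  (↑) '' {v : N | (incompGraph N).connectedComponentMk v ∈ Set.Icc C D}

section ComponentInterval

variable {N : Set α} {C D C' D' : (incompGraph N).ConnectedComponent}

theorem componentInterval_subset : componentInterval C D ⊆ N := by
  rintro _ ⟨v, -, rfl⟩
  exact v.2

theorem mem_componentInterval {v : N} :
    ↑v ∈ componentInterval C D ↔ (incompGraph N).connectedComponentMk v ∈ Set.Icc C D :=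
  Subtype.val_injective.mem_set_image

theorem lt_of_mem_componentInterval {u v : α} (hu : u ∈ componentInterval C D)
    (hv : v ∈ componentInterval C' D') (hlt : D < C') : u < v := by
  obtain ⟨u, hu, rfl⟩ := hu
  obtain ⟨v, hv, rfl⟩ := hv
  exact lt_of_connectedComponentMk_lt (α := N) (hu.2.trans_lt (hlt.trans_le hv.1))

theorem forall_lt_or_forall_gt_of_notMem_componentInterval {y : α} (hy : y ∈ N)
    (hyCD : y ∉ componentInterval C D) :
    (∀ v ∈ componentInterval C D, y < v) ∨ (∀ v ∈ componentInterval C D, v < y) := by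
  let Y := (incompGraph N).connectedComponentMk ⟨y, hy⟩
  have hyY : y ∈ componentInterval Y Y := mem_componentInterval.2 ⟨le_rfl, le_rfl⟩
  by_cases hCY : C ≤ Y
  · have hDY : D < Y := lt_of_not_ge fun h => hyCD (mem_componentInterval.2 ⟨hCY, h⟩)
    exact .inr fun v hv => lt_of_mem_componentInterval hv hyY hDY
  · exact .inl fun v hv => lt_of_mem_componentInterval hyY hv (lt_of_not_ge hCY)

end ComponentInterval

end incompGraph

theorem PosetPrime.exists_separating (hP : PosetPrime P) {B : Set α} (hB : B.Nontrivial)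
    (hne : B ≠ Set.univ) :
    ∃ y ∉ B, ∃ p ∈ B, ∃ q ∈ B, (y < p ∧ ¬ y < q) ∨ (p < y ∧ ¬ q < y) := by
  have hB' : ¬ PosetAutonomous P B := fun h => by
    rcases hP.2 B h with rfl | ⟨x, rfl⟩ | rfl
    · exact Set.not_nontrivial_empty hB
    · exact Set.not_nontrivial_singleton hB
    · exact hne rfl
  by_contra! h
  exact hB' fun y hy p hp q hq => h y hy p hp q hq

namespace incompGraph

theorem exists_notMem_separating_componentInterval (hP : PosetPrime P) {N : Set α}
    {C D E : (incompGraph N).ConnectedComponent} (hCD : C < D) (hE : E ∉ Set.Icc C D) :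
    ∃ y ∉ N, ∃ p ∈ componentInterval C D, ∃ q ∈ componentInterval C D,
      (y < p ∧ ¬ y < q) ∨ (p < y ∧ ¬ q < y) := by
  induction C using SimpleGraph.ConnectedComponent.ind with | _ c
  induction D using SimpleGraph.ConnectedComponent.ind with | _ d
  induction E using SimpleGraph.ConnectedComponent.ind with | _ e
  have hcd : (c : α) < d := lt_of_connectedComponentMk_lt (α := N) hCD
  have hnontriv := Set.nontrivial_of_mem_mem_ne
    (mem_componentInterval.2 ⟨le_rfl, hCD.le⟩) (mem_componentInterval.2 ⟨hCD.le, le_rfl⟩) hcd.ne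
  have hne : componentInterval _ _ ≠ Set.univ := fun h =>
    hE (mem_componentInterval.1 (h ▸ Set.mem_univ (e : α)))
  obtain ⟨y, hy, p, hp, q, hq, hsep⟩ := hP.exists_separating hnontriv hne
  refine ⟨y, fun hyN => ?_, p, hp, q, hq, hsep⟩
  rcases forall_lt_or_forall_gt_of_notMem_componentInterval hyN hy with h | h
  · exact hsep.elim (fun hs => hs.2 (h q hq)) fun hs => hs.1.asymm (h p hp)
  · exact hsep.elim (fun hs => hs.1.asymm (h p hp)) fun hs => hs.2 (h q hq)

theorem nonempty_G1_embedding_of_componentIntervals {K : Type*} [LinearOrder K] [Infinite K]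
    (hP : PosetPrime P) (hanti : ∀ S : Set α, IsAntichain (· ≤ ·) S → S.Finite) {N : Set α}
    (hN : N.OrdConnected) {C D : K → (incompGraph N).ConnectedComponent}
    (hCD : ∀ k, C k < D k) (hDC : ∀ k l, k < l → D k < C l) :
    Nonempty (G1 ↪g incompGraph α) := by
  refine nonempty_G1_embedding_of_forall_exists_separating hanti hN
    (B := fun k => componentInterval (C k) (D k)) (fun k => componentInterval_subset)
    (fun k l hkl u hu v hv => lt_of_mem_componentInterval hu hv (hDC k l hkl)) fun k => ?_
  obtain ⟨l, hlk⟩ := exists_ne k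
  refine exists_notMem_separating_componentInterval hP (hCD k) (E := C l) fun hl => ?_
  rcases lt_or_gt_of_ne hlk with h | h
  · exact hl.1.not_gt ((hCD l).trans (hDC l k h))
  · exact hl.2.not_gt (hDC k l h)

theorem nonempty_G1_embedding_of_infinite_connectedComponent (hP : PosetPrime P)
    (hanti : ∀ S : Set α, IsAntichain (· ≤ ·) S → S.Finite) {N : Set α} (hN : N.OrdConnected)
    [Infinite (incompGraph N).ConnectedComponent] : Nonempty (G1 ↪g incompGraph α) := by
  obtain ⟨c, hc | hc⟩ :=
    Infinite.exists_strictMono_or_strictAnti (incompGraph N).ConnectedComponent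
  · exact nonempty_G1_embedding_of_componentIntervals hP hanti hN
      (C := fun k : ℕ => c (2 * k)) (D := fun k => c (2 * k + 1))
      (fun k => hc (by omega)) (fun k l hkl => hc (by omega))
  · exact nonempty_G1_embedding_of_componentIntervals hP hanti hN
      (C := fun k : ℕᵒᵈ => c (2 * k.ofDual + 1)) (D := fun k => c (2 * k.ofDual))
      (fun k => hc (by omega)) (fun k l (hkl : l.ofDual < k.ofDual) => hc (by omega))

theorem ordConnected_neighborSet (x : α) : ((incompGraph α).neighborSet x).OrdConnected :=
  ⟨fun _ hu _ hv _ hy =>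
    ⟨fun hxy => hv.not_le (hxy.trans hy.2), fun hyx => hu.not_ge (hy.1.trans hyx)⟩⟩

theorem exists_infinite_inter_neighborSet (hP : PosetPrime P)
    (hanti : ∀ S : Set α, IsAntichain (· ≤ ·) S → S.Finite)
    (hG1 : IsEmpty (G1 ↪g incompGraph α)) (hray : IsEmpty (SimpleGraph.hasse ℕ ↪g incompGraph α))
    {N : Set α} (hN : N.OrdConnected) (hinf : N.Infinite) :
    ∃ x ∈ N, (N ∩ (incompGraph α).neighborSet x).Infinite := by
  by_contra! hfin
  have : Infinite N := hinf.to_subtype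
  have : Finite (incompGraph N).ConnectedComponent := by
    by_contra! h
    exact not_isEmpty_iff.2 (nonempty_G1_embedding_of_infinite_connectedComponent hP hanti hN) hG1
  let ι : incompGraph N ↪g incompGraph α := SimpleGraph.Embedding.induce (G := incompGraph α) N
  have hlocfin : ∀ v, ((incompGraph N).neighborSet v).Finite := fun v =>
    ((hfin v v.2).preimage ι.injective.injOn).subset fun w hw => ⟨w.2, hw⟩
  obtain ⟨φ⟩ := nonempty_hasse_nat_embedding hlocfin
  exact hray.false (φ.trans ι)

theorem nonempty_G1_embedding_or_nonempty_hasse_nat_embedding [Infinite α] (hP : PosetPrime P)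
    (hanti : ∀ S : Set α, IsAntichain (· ≤ ·) S → S.Finite) :
    Nonempty (G1 ↪g incompGraph α) ∨ Nonempty (SimpleGraph.hasse ℕ ↪g incompGraph α) := by
  by_contra! ⟨hG1, hray⟩
  obtain ⟨f, hf⟩ := exists_seq_adj_of_forall_exists_inter_neighborSet (G := incompGraph α)
    (p := fun N => N.OrdConnected ∧ N.Infinite) ⟨Set.ordConnected_univ, Set.infinite_univ⟩
    fun N hN => by
      obtain ⟨x, hx, hinf⟩ := exists_infinite_inter_neighborSet hP hanti hG1 hray hN.1 hN.2
      exact ⟨x, hx, hN.1.inter (ordConnected_neighborSet x), hinf⟩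
  obtain ⟨m, n, hmn, h⟩ := exists_lt_not_incompRel hanti f
  exact h (hf m n hmn)

end incompGraph

end Incomparability

/-- Every infinite prime poset with no infinite antichain contains an induced
subposet whose comparability graph is isomorphic to the complement of `G1` or
the complement of `G2`. -/
theorem infinite_prime_poset_no_infinite_antichain {α : Type*} [Infinite α]
    (P : PartialOrder α) (hprime : PosetPrime P)
    (hanti : ¬ ∃ S : Set α, S.Infinite ∧ IsAntichain P.le S) :
    Nonempty (G1ᶜ ↪g compGraph P) ∨ Nonempty (G2ᶜ ↪g compGraph P) := by
  have hfin : ∀ S : Set α, IsAntichain (· ≤ ·) S → S.Finite := fun S hS =>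
    Set.not_infinite.1 fun hinf => hanti ⟨S, hinf, hS⟩
  rw [← incompGraph_compl]
  rcases incompGraph.nonempty_G1_embedding_or_nonempty_hasse_nat_embedding hprime hfin
    with ⟨⟨φ⟩⟩ | ⟨⟨φ⟩⟩
  · exact .inl ⟨SimpleGraph.Embedding.complEquiv φ⟩
  · obtain ⟨ψ⟩ := nonempty_G2_embedding_hasse_nat
    exact .inr ⟨SimpleGraph.Embedding.complEquiv (ψ.trans φ)⟩
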